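/- arXiv:math/0303370 — 2 statements merged into one kernel-verified Lean document; each statement's English description precedes it below -/
import Mathlib

section
/- Let W be an n×n type-II matrix. Then W ∈ N_W if and only if there exists a nonzero complex scalar c such that cW is a spin model. Moreover, if W ∈ N_W, then N_W = N_{Wᵀ} and Θ_W(M) = Θ_{Wᵀ}(M) for every M ∈ N_W (so N_W is a formally self-dual Bose-Mesner algebra with duality map Θ_W = Θ_{Wᵀ}). -/
open Matrix

variable {m : Type*} [Fintype m] [DecidableEq m]

/-- The Schur (entrywise) inverse `A^(-)` of a matrix: `(A^(-))_{ij} = (A_{ij})⁻¹`. -/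
noncomputable def sinv (A : Matrix m m ℂ) : Matrix m m ℂ := Matrix.of fun i j => (A i j)⁻¹

/-- A type-II matrix: a Schur invertible matrix `W` with `W * (W^(-))ᵀ = n • I`,
where `n` is the size of the matrix. -/
def IsTypeII (A : Matrix m m ℂ) : Prop :=
  (∀ i j, A i j ≠ 0) ∧ A * (sinv A)ᵀ = (Fintype.card m : ℂ) • (1 : Matrix m m ℂ)

/-- `v_{ij} = (A e_i) ∘ (B e_j)`: the entrywise product of column `i` of `A`
with column `j` of `B`. -/
def colProd (A B : Matrix m m ℂ) (i j : m) : m → ℂ := fun k => A k i * B k j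

/-- Membership in the Nomura algebra `N_{A,B}`: every `v_{ij}` is an eigenvector of `M`. -/
def InNomura (A B M : Matrix m m ℂ) : Prop :=
  ∀ i j, ∃ c : ℂ, M.mulVec (colProd A B i j) = c • colProd A B i j

/-- `S = Θ_{A,B}(M)`: the matrix of eigenvalues, i.e. `M v_{ij} = S_{ij} v_{ij}` for all `i,j`. -/
def IsTheta (A B M S : Matrix m m ℂ) : Prop :=
  ∀ i j, M.mulVec (colProd A B i j) = S i j • colProd A B i j

/-- `(A,B)` is a Jones pair: `A` invertible, `B` Schur invertible, and
`X_A Δ_B X_A = Δ_B X_A Δ_B` and `X_A Δ_{Bᵀ} X_A = Δ_{Bᵀ} X_A Δ_{Bᵀ}`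
as operators on matrices. -/
def IsJonesPair (A B : Matrix m m ℂ) : Prop :=
  IsUnit A ∧ (∀ i j, B i j ≠ 0) ∧
  (∀ M : Matrix m m ℂ, A * (B ⊙ (A * M)) = B ⊙ (A * (B ⊙ M))) ∧
  (∀ M : Matrix m m ℂ, A * (Bᵀ ⊙ (A * M)) = Bᵀ ⊙ (A * (Bᵀ ⊙ M)))

/-- An invertible Jones pair: a Jones pair in which moreover `A` is Schur
invertible and `B` is invertible. -/
def IsInvertibleJonesPair (A B : Matrix m m ℂ) : Prop :=
  IsJonesPair A B ∧ (∀ i j, A i j ≠ 0) ∧ IsUnit B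

/-- `W` is a spin model: for some `d` with `d² = n`, `(d⁻¹ W, W^(-))` is an
invertible Jones pair. -/
def IsSpinModel (W : Matrix m m ℂ) : Prop :=
  ∃ d : ℂ, d ^ 2 = (Fintype.card m : ℂ) ∧ IsInvertibleJonesPair (d⁻¹ • W) (sinv W)

/-- Given an invertible Jones pair `(A,B)` with `A` symmetric, `K` is paired with
`H ∈ N_{A,B}` if `Kᵀ ∈ N_{A,Bᵀ}` and `Θ_{A,B}(H) = (Θ_{A,Bᵀ}(Kᵀ))ᵀ`. -/
def Paired (A B H K : Matrix m m ℂ) : Prop :=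
  ∃ S : Matrix m m ℂ, IsTheta A B H S ∧ IsTheta A Bᵀ Kᵀ Sᵀ

/-- The `4n × 4n` matrix with `4 × 4` block structure
`[[P, Q, R, R], [Q, P, R, R], [S, S, T, U], [S, S, U, T]]`. -/
def blockMat {n : ℕ} (P Q R S T U : Matrix (Fin n) (Fin n) ℂ) :
    Matrix (Fin 4 × Fin n) (Fin 4 × Fin n) ℂ :=
  Matrix.of fun x y =>
    (![![P, Q, R, R], ![Q, P, R, R], ![S, S, T, U], ![S, S, U, T]] x.1 y.1) x.2 y.2

/-- Yamada's `4n × 4n` matrix `V` built from `A`, `B` and `d` with `d² = n`. -/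
noncomputable def Vmat {n : ℕ} (A B : Matrix (Fin n) (Fin n) ℂ) (d : ℂ) :
    Matrix (Fin 4 × Fin n) (Fin 4 × Fin n) ℂ :=
  blockMat (d • A) (-(d • A)) (sinv B) (sinv B)ᵀ (d • A) (-(d • A))

/-!
For a type-II matrix `W` and a fixed `j`, write `v_{aj}` for the quotient of columns `a` and `j`.
The vectors `v_{aj}` form a basis whose dual basis is `n⁻¹ v_{ja}`, so a matrix `M` in `N_W` with
`S = Θ_W(M)` satisfies `n M = ∑ₐ S_{aj} v_{aj} v_{ja}ᵀ`. Hence `Mᵀ` is in `N_W` with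
`Θ_W(Mᵀ) = Sᵀ`, and `M` has constant diagonal and constant row sums.

For `M = W` the equations `Wᵀ v_{ji} = S_{ij} v_{ji}`, summed over `j`, say that `W Sᵀ` is a scalar
matrix, so `Θ_W(W) = g W^(-)` with `g ≠ 0`. The `k`-th entry of `Wᵀ v_{ji}` is
`∑_l W_{lk} W_{lj} / W_{li}`, which is symmetric in `j` and `k`; substituting the value of `S` shows
that the quotient of rows `i` and `j` of `W` is a multiple of the quotient of columns `i` and `j`.
This gives `Θ_W = Θ_{Wᵀ}`.

The braid relations for `(d⁻¹ c W, (c W)^(-))` say that, with `t = d c⁻²`, the matrix `W` has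
eigenvalue matrix `t W^(-)` on the vectors of `(W, W^(-))` and `t (W^(-))ᵀ` on those of
`(W, (W^(-))ᵀ)`. The proportionality of row and column quotients deduces the second from the first,
so it suffices to choose `d² = n` and `c² = d / g`.
-/

section SchurInverse

variable {ι : Type*}

lemma sinv_smul (c : ℂ) (A : Matrix ι ι ℂ) : sinv (c • A) = c⁻¹ • sinv A := by
  ext i j
  simp [sinv, mul_comm]

lemma colProd_sinv_apply (A : Matrix ι ι ℂ) (i j k : ι) :
    colProd A (sinv A) i j k = A k i / A k j :=
  (div_eq_mul_inv _ _).symm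

lemma colProd_smul_smul (a b : ℂ) (A B : Matrix ι ι ℂ) (i j : ι) :
    colProd (a • A) (b • B) i j = (a * b) • colProd A B i j := by
  ext k
  simp only [colProd, Matrix.smul_apply, Pi.smul_apply, smul_eq_mul]
  ring

end SchurInverse

section Nomura

variable {ι : Type*} [Fintype ι] {A B M S : Matrix ι ι ℂ}

lemma inNomura_iff_exists_isTheta : InNomura A B M ↔ ∃ S, IsTheta A B M S :=
  ⟨fun h ↦ by choose S hS using h; exact ⟨S, hS⟩, fun ⟨S, hS⟩ i j ↦ ⟨S i j, hS i j⟩⟩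

lemma isTheta_smul_iff {a b c : ℂ} (ha : a ≠ 0) (hb : b ≠ 0) (hc : c ≠ 0) :
    IsTheta (a • A) (b • B) (c • M) (c • S) ↔ IsTheta A B M S := by
  refine forall₂_congr fun i j ↦ ?_
  rw [colProd_smul_smul, Matrix.mulVec_smul, Matrix.smul_mulVec, Matrix.smul_apply, smul_assoc,
    smul_comm (S i j), smul_comm c (a * b),
    smul_right_inj (mul_ne_zero ha hb), smul_right_inj hc]

lemma isTheta_sinv_iff : IsTheta A (sinv A) M S ↔
    ∀ i j l, ∑ k, M l k * (A k i / A k j) = S i j * (A l i / A l j) := by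
  simp only [IsTheta, funext_iff, mulVec, dotProduct, colProd_sinv_apply, Pi.smul_apply,
    smul_eq_mul]

lemma forall_braid_iff_isTheta :
    (∀ M, A * (B ⊙ (A * M)) = B ⊙ (A * (B ⊙ M))) ↔ IsTheta A B A B := by
  classical
  have entrywise : IsTheta A B A B ↔
      ∀ i j l, ∑ k, A l k * (B k j * A k i) = B l j * (A l i * B i j) := by
    refine forall₂_congr fun i j ↦ funext_iff.trans (forall_congr' fun l ↦ ?_)
    simp only [mulVec, dotProduct, colProd, Pi.smul_apply, smul_eq_mul, mul_comm, mul_left_comm]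
  rw [entrywise]
  refine ⟨fun braid i j l ↦ ?_, fun eigen M ↦ ?_⟩
  · simpa [Matrix.mul_apply, Matrix.single_apply] using
      congrFun₂ (braid (Matrix.single i j 1)) l j
  · ext l j
    calc (A * (B ⊙ (A * M))) l j
        = ∑ i, (∑ k, A l k * (B k j * A k i)) * M i j := by
          simp only [Matrix.mul_apply, hadamard_apply, Finset.mul_sum, Finset.sum_mul, mul_assoc]
          exact Finset.sum_comm
      _ = ∑ i, B l j * (A l i * B i j) * M i j := by simp only [eigen]
      _ = (B ⊙ (A * (B ⊙ M))) l j := by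
          simp only [Matrix.mul_apply, hadamard_apply, Finset.mul_sum, mul_assoc]

end Nomura

namespace IsTypeII

variable {ι : Type*} [Fintype ι] [DecidableEq ι] {W M S : Matrix ι ι ℂ}

lemma isUnit (hW : IsTypeII W) : IsUnit W := by
  cases isEmpty_or_nonempty ι
  · exact isUnit_of_subsingleton W
  · refine IsUnit.of_mul_eq_one ((Fintype.card ι : ℂ)⁻¹ • (sinv W)ᵀ) ?_
    rw [Matrix.mul_smul, hW.2, inv_smul_smul₀ (NeZero.ne (Fintype.card ι : ℂ))]

protected lemma sinv (hW : IsTypeII W) : IsTypeII (sinv W) := by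
  refine ⟨fun i j ↦ inv_ne_zero (hW.1 i j), ?_⟩
  have sinv_sinv : sinv (sinv W) = W := by
    ext i j
    exact inv_inv (W i j)
  rw [sinv_sinv]
  simpa using congrArg Matrix.transpose hW.2

protected lemma transpose (hW : IsTypeII W) : IsTypeII Wᵀ := by
  have sinv_mul : (sinv W)ᵀ * W = (Fintype.card ι : ℂ) • 1 := by
    refine hW.isUnit.mul_left_cancel ?_
    rw [← Matrix.mul_assoc, hW.2, Matrix.smul_mul, Matrix.one_mul, Matrix.mul_smul, Matrix.mul_one]
  refine ⟨fun i j ↦ hW.1 j i, ?_⟩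
  rw [show (sinv Wᵀ)ᵀ = sinv W from rfl]
  simpa using congrArg Matrix.transpose sinv_mul

lemma sum_row_div_row (hW : IsTypeII W) (i j : ι) :
    ∑ k, W i k / W j k = if i = j then (Fintype.card ι : ℂ) else 0 := by
  simpa [Matrix.mul_apply, sinv, Matrix.one_apply, div_eq_mul_inv] using congrFun₂ hW.2 i j

lemma sum_col_div_col (hW : IsTypeII W) (i j : ι) :
    ∑ k, W k i / W k j = if i = j then (Fintype.card ι : ℂ) else 0 :=
  hW.transpose.sum_row_div_row i j

lemma sum_vecMulVec_colProd (hW : IsTypeII W) (j : ι) :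
    ∑ a, vecMulVec (colProd W (sinv W) a j) (colProd W (sinv W) j a) =
      (Fintype.card ι : ℂ) • 1 := by
  ext k l
  calc (∑ a, vecMulVec (colProd W (sinv W) a j) (colProd W (sinv W) j a)) k l
      = W l j / W k j * ∑ a, W k a / W l a := by
        simp only [Matrix.sum_apply, vecMulVec_apply, colProd_sinv_apply, Finset.mul_sum]
        exact Finset.sum_congr rfl fun a _ ↦ by ring
    _ = ((Fintype.card ι : ℂ) • (1 : Matrix ι ι ℂ)) k l := by
        rw [hW.sum_row_div_row, Matrix.smul_apply, Matrix.one_apply]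
        split_ifs with hkl
        · simp [hkl, div_self (hW.1 l j)]
        · simp

lemma colProd_dotProduct_colProd (hW : IsTypeII W) (a b j : ι) :
    colProd W (sinv W) j a ⬝ᵥ colProd W (sinv W) b j =
      if b = a then (Fintype.card ι : ℂ) else 0 := by
  rw [← hW.sum_col_div_col b a]
  refine Finset.sum_congr rfl fun k _ ↦ ?_
  rw [colProd_sinv_apply, colProd_sinv_apply, mul_comm, div_mul_div_cancel₀ (hW.1 k j)]

lemma card_smul_eq_sum (hW : IsTypeII W) (hS : IsTheta W (sinv W) M S) (j : ι) :
    (Fintype.card ι : ℂ) • M =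
      ∑ a, S a j • vecMulVec (colProd W (sinv W) a j) (colProd W (sinv W) j a) :=
  calc (Fintype.card ι : ℂ) • M
      = M * ∑ a, vecMulVec (colProd W (sinv W) a j) (colProd W (sinv W) j a) := by
        rw [hW.sum_vecMulVec_colProd, Matrix.mul_smul, Matrix.mul_one]
    _ = ∑ a, S a j • vecMulVec (colProd W (sinv W) a j) (colProd W (sinv W) j a) := by
        simp only [Matrix.mul_sum, mul_vecMulVec, hS _ _, smul_vecMulVec]

lemma isTheta_transpose_transpose (hW : IsTypeII W) (hS : IsTheta W (sinv W) M S) :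
    IsTheta W (sinv W) Mᵀ Sᵀ := by
  intro j i
  have : Nonempty ι := ⟨i⟩
  have decomposition : (Fintype.card ι : ℂ) • Mᵀ =
      ∑ a, S a j • vecMulVec (colProd W (sinv W) j a) (colProd W (sinv W) a j) := by
    rw [← Matrix.transpose_smul, hW.card_smul_eq_sum hS j, Matrix.transpose_sum]
    simp only [Matrix.transpose_smul, transpose_vecMulVec]
  refine smul_right_injective _ (NeZero.ne (Fintype.card ι : ℂ)) ?_
  calc (Fintype.card ι : ℂ) • Mᵀ *ᵥ colProd W (sinv W) j i
      = ∑ a, S a j • (colProd W (sinv W) a j ⬝ᵥ colProd W (sinv W) j i) •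
          colProd W (sinv W) j a := by
        rw [← Matrix.smul_mulVec, decomposition, Matrix.sum_mulVec]
        simp only [Matrix.smul_mulVec, vecMulVec_mulVec, op_smul_eq_smul]
    _ = S i j • (Fintype.card ι : ℂ) • colProd W (sinv W) j i := by
        simp only [dotProduct_comm _ (colProd W (sinv W) j i), hW.colProd_dotProduct_colProd,
          ite_smul, zero_smul, smul_ite, smul_zero, Finset.sum_ite_eq', Finset.mem_univ, if_true]
    _ = (Fintype.card ι : ℂ) • S i j • colProd W (sinv W) j i := smul_comm _ _ _

lemma card_mul_diag (hW : IsTypeII W) (hS : IsTheta W (sinv W) M S) (j l : ι) :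
    Fintype.card ι * M l l = ∑ a, S a j := by
  have entry := congrFun₂ (hW.card_smul_eq_sum hS j) l l
  simp only [Matrix.smul_apply, smul_eq_mul, Matrix.sum_apply, vecMulVec_apply,
    colProd_sinv_apply] at entry
  rw [entry]
  refine Finset.sum_congr rfl fun a _ ↦ ?_
  rw [div_mul_div_cancel₀ (hW.1 l j), div_self (hW.1 l a), mul_one]

lemma diag_eq_diag (hW : IsTypeII W) (hS : IsTheta W (sinv W) M S) (k l : ι) :
    M k k = M l l := by
  have : Nonempty ι := ⟨k⟩
  exact mul_left_cancel₀ (NeZero.ne (Fintype.card ι : ℂ))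
    ((hW.card_mul_diag hS k k).trans (hW.card_mul_diag hS k l).symm)

lemma sum_row_eq (hW : IsTypeII W) (hS : IsTheta W (sinv W) M S) (j l : ι) :
    ∑ k, M l k = S j j := by
  have colProd_diag : colProd W (sinv W) j j = 1 := by
    ext k
    exact mul_inv_cancel₀ (hW.1 k j)
  simpa [colProd_diag, mulVec, dotProduct] using congrFun (hS j j) l

lemma sum_col_mul_col_div_col (hW : IsTypeII W) (hS : IsTheta W (sinv W) W S) (i j k : ι) :
    ∑ l, W l j * W l k / W l i = S i j * (W k j / W k i) := by
  have eigen := isTheta_sinv_iff.mp (hW.isTheta_transpose_transpose hS) j i k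
  simpa only [Matrix.transpose_apply, mul_div_assoc', mul_comm (W _ j)] using eigen

lemma theta_self_eq_smul_sinv (hW : IsTypeII W) (hS : IsTheta W (sinv W) W S) (o : ι) :
    S = (S o o * W o o) • sinv W := by
  refine Matrix.transpose_injective (hW.isUnit.mul_left_cancel ?_)
  rw [Matrix.transpose_smul, Matrix.mul_smul, hW.2]
  ext k i
  calc (W * Sᵀ) k i
      = W k i * ∑ j, S i j * (W k j / W k i) := by
        rw [Matrix.mul_apply, Finset.mul_sum]
        refine Finset.sum_congr rfl fun j _ ↦ ?_
        rw [Matrix.transpose_apply]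
        field_simp [hW.1 k i]
    _ = W k i * ∑ l, (∑ j, W l j) * (W l k / W l i) := by
        simp only [← hW.sum_col_mul_col_div_col hS, mul_div_assoc, Finset.sum_mul]
        rw [Finset.sum_comm]
    _ = W k i * (S o o * if k = i then (Fintype.card ι : ℂ) else 0) := by
        simp only [hW.sum_row_eq hS o, ← Finset.mul_sum, hW.sum_col_div_col]
    _ = ((S o o * W o o) • (Fintype.card ι : ℂ) • (1 : Matrix ι ι ℂ)) k i := by
        simp only [Matrix.smul_apply, Matrix.one_apply, smul_eq_mul]
        split_ifs with hki
        · rw [hki, hW.diag_eq_diag hS i o]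
          ring
        · ring

lemma exists_theta_self_eq_smul_sinv [Nonempty ι] (hW : IsTypeII W)
    (hS : IsTheta W (sinv W) W S) : ∃ g : ℂ, g ≠ 0 ∧ S = g • sinv W := by
  obtain ⟨o⟩ := ‹Nonempty ι›
  refine ⟨S o o * W o o, mul_ne_zero (fun hSo ↦ ?_) (hW.1 o o), hW.theta_self_eq_smul_sinv hS o⟩
  have mulVec_one : W *ᵥ 1 = W *ᵥ 0 := by
    ext l
    simpa [mulVec, dotProduct, hSo] using hW.sum_row_eq hS o l
  exact one_ne_zero (congrFun (mulVec_injective_of_isUnit hW.isUnit mulVec_one) o)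

lemma sum_col_mul_col_div_col_self {g : ℂ} (hW : IsTypeII W)
    (hg : IsTheta W (sinv W) W (g • sinv W)) (i j k : ι) :
    ∑ l, W l j * W l k / W l i = g * W k j / (W i j * W k i) := by
  rw [hW.sum_col_mul_col_div_col hg, Matrix.smul_apply, smul_eq_mul, sinv, Matrix.of_apply]
  field_simp

lemma row_div_row_eq {g : ℂ} (hW : IsTypeII W) (hg₀ : g ≠ 0)
    (hg : IsTheta W (sinv W) W (g • sinv W)) (i j k : ι) :
    W i k / W j k = W i j / W j i * (W k i / W k j) := by
  have symm : g * W k j / (W i j * W k i) = g * W j k / (W i k * W j i) := by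
    rw [← hW.sum_col_mul_col_div_col_self hg, ← hW.sum_col_mul_col_div_col_self hg]
    simp only [mul_comm]
  field_simp [hW.1] at symm ⊢
  linear_combination symm

lemma colProd_transpose_eq_smul {g : ℂ} (hW : IsTypeII W) (hg₀ : g ≠ 0)
    (hg : IsTheta W (sinv W) W (g • sinv W)) (i j : ι) :
    colProd Wᵀ (sinv Wᵀ) i j = (W i j / W j i) • colProd W (sinv W) i j := by
  ext k
  rw [Pi.smul_apply, colProd_sinv_apply, colProd_sinv_apply, smul_eq_mul]
  exact hW.row_div_row_eq hg₀ hg i j k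

lemma isTheta_iff_isTheta_transpose (hW : IsTypeII W)
    (hWW : InNomura W (sinv W) W) :
    IsTheta W (sinv W) M S ↔ IsTheta Wᵀ (sinv Wᵀ) M S := by
  refine forall₂_congr fun i j ↦ ?_
  have : Nonempty ι := ⟨i⟩
  obtain ⟨T, hT⟩ := inNomura_iff_exists_isTheta.mp hWW
  obtain ⟨g, hg₀, rfl⟩ := hW.exists_theta_self_eq_smul_sinv hT
  rw [hW.colProd_transpose_eq_smul hg₀ hT, Matrix.mulVec_smul, smul_comm (S i j),
    smul_right_inj (div_ne_zero (hW.1 i j) (hW.1 j i))]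

lemma inNomura_iff_inNomura_transpose (hW : IsTypeII W) (hWW : InNomura W (sinv W) W) :
    InNomura W (sinv W) M ↔ InNomura Wᵀ (sinv Wᵀ) M :=
  inNomura_iff_exists_isTheta.trans <|
    (exists_congr fun _ ↦ hW.isTheta_iff_isTheta_transpose hWW).trans
      inNomura_iff_exists_isTheta.symm

lemma isTheta_transpose_sinv_self {g : ℂ} (hW : IsTypeII W) (hg₀ : g ≠ 0)
    (hg : IsTheta W (sinv W) W (g • sinv W)) :
    IsTheta W (sinv W)ᵀ W (g • (sinv W)ᵀ) := by
  intro i j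
  ext l
  calc ∑ k, W l k * (W k i * (W j k)⁻¹)
      = W l j / W j l * ∑ k, W k i * W k l / W k j := by
        rw [Finset.mul_sum]
        refine Finset.sum_congr rfl fun k _ ↦ ?_
        linear_combination W k i * hW.row_div_row_eq hg₀ hg l j k
    _ = g * (W j i)⁻¹ * (W l i * (W j l)⁻¹) := by
        rw [hW.sum_col_mul_col_div_col_self hg]
        field_simp [hW.1]

lemma isSpinModel_smul_iff [Nonempty ι] {c : ℂ} (hW : IsTypeII W) (hc : c ≠ 0) :
    IsSpinModel (c • W) ↔ ∃ d : ℂ, d ^ 2 = Fintype.card ι ∧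
      IsTheta W (sinv W) W ((d / c ^ 2) • sinv W) ∧
      IsTheta W (sinv W)ᵀ W ((d / c ^ 2) • (sinv W)ᵀ) := by
  refine exists_congr fun d ↦ and_congr_right fun hd ↦ ?_
  have hd₀ : d ≠ 0 := (pow_ne_zero_iff two_ne_zero).mp (hd ▸ NeZero.ne _)
  have hdc : d⁻¹ * c ≠ 0 := mul_ne_zero (inv_ne_zero hd₀) hc
  have theta_scaling (V : Matrix ι ι ℂ) : c⁻¹ • V = (d⁻¹ * c) • (d / c ^ 2) • V := by
    rw [smul_smul]
    congr 1
    field_simp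
  have braid_iff (V : Matrix ι ι ℂ) :
      (∀ M, (d⁻¹ • c • W) * ((c⁻¹ • V) ⊙ ((d⁻¹ • c • W) * M)) =
        (c⁻¹ • V) ⊙ ((d⁻¹ • c • W) * ((c⁻¹ • V) ⊙ M))) ↔
      IsTheta W V W ((d / c ^ 2) • V) := by
    rw [forall_braid_iff_isTheta, smul_smul]
    nth_rw 2 [theta_scaling]
    rw [isTheta_smul_iff hdc (inv_ne_zero hc) hdc]
  have isUnit_smul {V : Matrix ι ι ℂ} {a : ℂ} (ha : a ≠ 0) (hV : IsUnit V) : IsUnit (a • V) :=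
    hV.smul (Units.mk0 a ha)
  rw [IsInvertibleJonesPair, IsJonesPair, sinv_smul, Matrix.transpose_smul, braid_iff, braid_iff]
  refine ⟨fun h ↦ h.1.2.2, fun h ↦ ⟨⟨?_, ?_, h⟩, ?_, ?_⟩⟩
  · exact isUnit_smul (inv_ne_zero hd₀) (isUnit_smul hc hW.isUnit)
  · exact fun i j ↦ mul_ne_zero (inv_ne_zero hc) (hW.sinv.1 i j)
  · exact fun i j ↦ mul_ne_zero (inv_ne_zero hd₀) (mul_ne_zero hc (hW.1 i j))
  · exact isUnit_smul (inv_ne_zero hc) hW.sinv.isUnit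

lemma inNomura_self_iff_exists_isSpinModel_smul [Nonempty ι] (hW : IsTypeII W) :
    InNomura W (sinv W) W ↔ ∃ c : ℂ, c ≠ 0 ∧ IsSpinModel (c • W) := by
  refine ⟨fun hWW ↦ ?_, fun ⟨c, hc, spin⟩ ↦ ?_⟩
  · obtain ⟨S, hS⟩ := inNomura_iff_exists_isTheta.mp hWW
    obtain ⟨g, hg₀, rfl⟩ := hW.exists_theta_self_eq_smul_sinv hS
    obtain ⟨d, hd⟩ := IsAlgClosed.exists_pow_nat_eq (Fintype.card ι : ℂ) two_pos
    have hd₀ : d ≠ 0 := (pow_ne_zero_iff two_ne_zero).mp (hd ▸ NeZero.ne _)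
    obtain ⟨c, hc⟩ := IsAlgClosed.exists_pow_nat_eq (d / g) two_pos
    have hc₀ : c ≠ 0 := by
      rintro rfl
      simp [hd₀, hg₀, eq_comm] at hc
    refine ⟨c, hc₀, (hW.isSpinModel_smul_iff hc₀).mpr ⟨d, hd, ?_⟩⟩
    rw [hc, div_div_cancel₀ hd₀]
    exact ⟨hS, hW.isTheta_transpose_sinv_self hg₀ hS⟩
  · obtain ⟨d, -, hS, -⟩ := (hW.isSpinModel_smul_iff hc).mp spin
    exact inNomura_iff_exists_isTheta.mpr ⟨_, hS⟩

end IsTypeII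

theorem spin_model_characterization_general {ι : Type*} [Fintype ι] [DecidableEq ι] [Nonempty ι]
    {W : Matrix ι ι ℂ} (hW : IsTypeII W) :
    (InNomura W (sinv W) W ↔ ∃ c : ℂ, c ≠ 0 ∧ IsSpinModel (c • W)) ∧
    (InNomura W (sinv W) W →
      {M : Matrix ι ι ℂ | InNomura W (sinv W) M} =
        {M : Matrix ι ι ℂ | InNomura Wᵀ (sinv Wᵀ) M} ∧
      ∀ M S : Matrix ι ι ℂ, IsTheta W (sinv W) M S → IsTheta Wᵀ (sinv Wᵀ) M S) := by
  refine ⟨hW.inNomura_self_iff_exists_isSpinModel_smul, fun hWW ↦ ⟨?_, fun M S ↦ ?_⟩⟩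
  · exact Set.ext fun M ↦ hW.inNomura_iff_inNomura_transpose hWW
  · exact (hW.isTheta_iff_isTheta_transpose hWW).mp

theorem spin_model_characterization {n : ℕ} (hn : 0 < n) (W : Matrix (Fin n) (Fin n) ℂ)
    (hW : IsTypeII W) :
    (InNomura W (sinv W) W ↔ ∃ c : ℂ, c ≠ 0 ∧ IsSpinModel (c • W)) ∧
    (InNomura W (sinv W) W →
      {M : Matrix (Fin n) (Fin n) ℂ | InNomura W (sinv W) M} =
        {M : Matrix (Fin n) (Fin n) ℂ | InNomura Wᵀ (sinv Wᵀ) M} ∧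
      ∀ M S : Matrix (Fin n) (Fin n) ℂ,
        IsTheta W (sinv W) M S → IsTheta Wᵀ (sinv Wᵀ) M S) := by
  have : Nonempty (Fin n) := ⟨⟨0, hn⟩⟩
  exact spin_model_characterization_general hW
end

section
/- Let (A,B) be an invertible Jones pair of n×n complex matrices. Then for every M ∈ N_A one has M ∈ N_B and Θ_B(M)ᵀ = B^{-1}·Θ_A(M)·B. -/
open Matrix

variable {m : Type*} [Fintype m] [DecidableEq m]

/-!
For a type-II matrix `B`, the Schur inverse is the inverse up to scale and transposition:
`(B^(-))ᵀ = n B⁻¹`. Inverting `B` in the eigenvector equations `M v_{ij} = S_{ij} v_{ij}` of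
`N_{A,B}` therefore exchanges the roles of `M` and `S`: the matrix `S` maps
`(Bᵀ e_l) ∘ ((Bᵀ)^(-) e_k)` to `n M_{lk}` times `(Aᵀ e_k) ∘ ((Aᵀ)^(-) e_l)`.

For `B = A^(-)` this is the duality `Θ_{Aᵀ}(Θ_A(M)) = n Mᵀ`. If instead `Θ_{A,B}(N) = G`, it says
that `G` maps the vectors defining `N_{Bᵀ}` to multiples of those defining `N_{Aᵀ}`. So if `G` is
invertible, `G⁻¹ Θ_A(M) G` lies in `N_{Bᵀ}` with `n M` as its matrix of eigenvalues, and duality for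
`Bᵀ` returns `Θ_B(M) = (G⁻¹ Θ_A(M) G)ᵀ`. For a Jones pair `Θ_{A,B}(A) = B`, so `G = B`.

That `A` and `B` are type II comes from the same equations with `k = l`: there `Θ_{A,B}(A) = B` says
that `B` maps the vector with entries `B_{lj} (B⁻¹)_{jl}` to a constant vector, and from this
`B_{lj} (B⁻¹)_{jl}` does not depend on `l`. The relation for `Bᵀ` makes it independent of `j` too.
-/

section MatrixInverse

variable {ι R : Type*} [Fintype ι] [DecidableEq ι] [CommRing R] {G S : Matrix ι ι R}

theorem sum_apply_mul_inv_apply (hG : IsUnit G) (i : ι) : ∑ j, G i j * G⁻¹ j i = 1 := by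
  rw [← mul_apply, mul_nonsing_inv _ ((isUnit_iff_isUnit_det _).mp hG), one_apply_eq]

theorem conj_mulVec_eq_smul {v w : ι → R} {c μ : R} (hG : IsUnit G) (hGv : G *ᵥ v = c • w)
    (hSw : S *ᵥ w = μ • w) :
    (G⁻¹ * S * G) *ᵥ v = μ • v :=
  calc (G⁻¹ * S * G) *ᵥ v
      = G⁻¹ *ᵥ (S *ᵥ (G *ᵥ v)) := by rw [mulVec_mulVec, mulVec_mulVec]
    _ = μ • (G⁻¹ *ᵥ (G *ᵥ v)) := by
      rw [hGv, mulVec_smul, hSw, smul_comm, mulVec_smul, ← hGv]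
    _ = μ • v := by
      rw [mulVec_mulVec, nonsing_inv_mul _ ((isUnit_iff_isUnit_det _).mp hG), one_mulVec]

end MatrixInverse

section Theta

variable {ι : Type*} {A B M S : Matrix ι ι ℂ}

theorem sinv_sinv (A : Matrix ι ι ℂ) : sinv (sinv A) = A := by
  ext i j
  exact inv_inv (A i j)

theorem sinv_transpose (A : Matrix ι ι ℂ) : sinv Aᵀ = (sinv A)ᵀ := rfl

theorem colProd_comm (A B : Matrix ι ι ℂ) (i j : ι) : colProd A B i j = colProd B A j i :=
  funext fun _ => mul_comm _ _

variable [Fintype ι]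

theorem isTheta_iff_sum :
    IsTheta A B M S ↔ ∀ i j l, ∑ p, M l p * (A p i * B p j) = S i j * (A l i * B l j) := by
  simp only [IsTheta, funext_iff]
  rfl

theorem IsTheta.inNomura (h : IsTheta A B M S) : InNomura A B M :=
  fun i j => ⟨S i j, h i j⟩

theorem IsTheta.swap (h : IsTheta A B M S) : IsTheta B A M Sᵀ := fun i j => by
  rw [colProd_comm B A]
  exact h j i

theorem IsTheta.smul (c : ℂ) (h : IsTheta A B M S) : IsTheta A B (c • M) (c • S) := fun i j => by
  rw [smul_mulVec, h i j, Matrix.smul_apply, smul_assoc]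

variable [DecidableEq ι]

theorem IsTheta.mulVec_row_mul_col_inv (h : IsTheta A B M S) {l : ι}
    (hA : ∀ i, A l i ≠ 0) (hB : IsUnit B) (k : ι) :
    S *ᵥ (B.row l * B⁻¹.col k) = M l k • (A.row k / A.row l) := by
  ext i
  have h_vecMul : (M.row l * A.col i) ᵥ* B = A l i • (S.row i * B.row l) := by
    ext j
    calc ((M.row l * A.col i) ᵥ* B) j
        = ∑ p, M l p * (A p i * B p j) := Finset.sum_congr rfl fun p _ => mul_assoc _ _ _
      _ = S i j * (A l i * B l j) := isTheta_iff_sum.mp h i j l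
      _ = A l i * (S i j * B l j) := mul_left_comm _ _ _
  have h_entry : A l i * (S *ᵥ (B.row l * B⁻¹.col k)) i = M l k * A k i :=
    calc A l i * (S *ᵥ (B.row l * B⁻¹.col k)) i
        = ((A l i • (S.row i * B.row l)) ᵥ* B⁻¹) k := by
          simp only [mulVec, vecMul, dotProduct, Finset.mul_sum, Pi.smul_apply, Pi.mul_apply,
            row_apply, col_apply, smul_eq_mul, mul_assoc]
      _ = (M.row l * A.col i) k := by
          rw [← h_vecMul, vecMul_vecMul, mul_nonsing_inv _ ((isUnit_iff_isUnit_det _).mp hB),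
            vecMul_one]
  calc (S *ᵥ (B.row l * B⁻¹.col k)) i
      = M l k * A k i / A l i := eq_div_of_mul_eq (hA i) ((mul_comm _ _).trans h_entry)
    _ = M l k * (A k i / A l i) := mul_div_assoc _ _ _

theorem IsTheta.apply_mul_inv_apply (h : IsTheta A B M S) {l : ι} (hA : ∀ i, A l i ≠ 0)
    (hB : IsUnit B) (hS : IsUnit S) (j : ι) :
    B l j * B⁻¹ j l = M l l * ∑ k, S⁻¹ j k := by
  have h_const : S *ᵥ (B.row l * B⁻¹.col l) = M l l • 1 := by
    rw [h.mulVec_row_mul_col_inv hA hB]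
    exact congrArg _ (funext fun i => div_self (hA i))
  calc B l j * B⁻¹ j l
      = (S⁻¹ *ᵥ (S *ᵥ (B.row l * B⁻¹.col l))) j := by
        rw [mulVec_mulVec, nonsing_inv_mul _ ((isUnit_iff_isUnit_det _).mp hS), one_mulVec]
        rfl
    _ = M l l * ∑ k, S⁻¹ j k := by
        rw [h_const, mulVec_smul]
        exact congrArg (M l l * ·) (dotProduct_one (S⁻¹.row j))

theorem IsTheta.diag_eq (h : IsTheta A B M S) (hA : ∀ i j, A i j ≠ 0) (hB : IsUnit B)
    (hS : IsUnit S) (l l' : ι) : M l l = M l' l' := by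
  have h_eq_inv (p : ι) : M p p = (∑ j, ∑ k, S⁻¹ j k)⁻¹ := by
    refine eq_inv_of_mul_eq_one_left ?_
    rw [Finset.mul_sum, ← sum_apply_mul_inv_apply hB p]
    exact Finset.sum_congr rfl fun j _ => (h.apply_mul_inv_apply (hA p) hB hS j).symm
  rw [h_eq_inv l, h_eq_inv l']

theorem IsTheta.apply_mul_inv_apply_eq (h : IsTheta A B M S) (hA : ∀ i j, A i j ≠ 0)
    (hB : IsUnit B) (hS : IsUnit S) (l l' j : ι) : B l j * B⁻¹ j l = B l' j * B⁻¹ j l' := by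
  rw [h.apply_mul_inv_apply (hA l) hB hS, h.apply_mul_inv_apply (hA l') hB hS,
    h.diag_eq hA hB hS l l']

end Theta

section TypeII

variable {ι : Type*} [Fintype ι] [DecidableEq ι] {A B M S : Matrix ι ι ℂ}

theorem isTypeII_of_apply_mul_inv_apply_eq (hA : IsUnit A)
    (h : ∀ i j i' j', A i j * A⁻¹ j i = A i' j' * A⁻¹ j' i') : IsTypeII A := by
  have h_card (i j : ι) : A i j * (Fintype.card ι * A⁻¹ j i) = 1 :=
    calc A i j * (Fintype.card ι * A⁻¹ j i)
        = ∑ _j' : ι, A i j * A⁻¹ j i := by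
          rw [Finset.sum_const, nsmul_eq_mul, Finset.card_univ, mul_left_comm]
      _ = ∑ j', A i j' * A⁻¹ j' i := Finset.sum_congr rfl fun j' _ => h i j i j'
      _ = 1 := sum_apply_mul_inv_apply hA i
  have h_sinv : (sinv A)ᵀ = (Fintype.card ι : ℂ) • A⁻¹ := by
    ext j i
    exact inv_eq_of_mul_eq_one_right (h_card i j)
  refine ⟨fun i j => left_ne_zero_of_mul_eq_one (h_card i j), ?_⟩
  rw [h_sinv, mul_smul_comm, mul_nonsing_inv _ ((isUnit_iff_isUnit_det _).mp hA)]

theorem isTypeII_sinv (hA : IsTypeII A) : IsTypeII (sinv A) := by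
  refine ⟨fun i j => inv_ne_zero (hA.1 i j), ?_⟩
  rw [sinv_sinv, ← transpose_transpose (sinv A), ← transpose_mul, hA.2, transpose_smul,
    transpose_one]

theorem IsTypeII.mul_inv_card_smul_transpose_sinv [Nonempty ι] (hA : IsTypeII A) :
    A * ((Fintype.card ι : ℂ)⁻¹ • (sinv A)ᵀ) = 1 := by
  rw [mul_smul_comm, hA.2, inv_smul_smul₀ (Nat.cast_ne_zero.mpr Fintype.card_ne_zero)]

theorem IsTypeII.isUnit_s11 (hA : IsTypeII A) : IsUnit A := by
  cases isEmpty_or_nonempty ι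
  · exact isUnit_of_subsingleton A
  · exact .of_mul_eq_one _ hA.mul_inv_card_smul_transpose_sinv

theorem IsTypeII.transpose_sinv (hA : IsTypeII A) :
    (sinv A)ᵀ = (Fintype.card ι : ℂ) • A⁻¹ := by
  cases isEmpty_or_nonempty ι
  · exact Subsingleton.elim _ _
  · rw [inv_eq_right_inv hA.mul_inv_card_smul_transpose_sinv,
      smul_inv_smul₀ (Nat.cast_ne_zero.mpr Fintype.card_ne_zero)]

theorem isTypeII_transpose (hA : IsTypeII A) : IsTypeII Aᵀ := by
  refine ⟨fun i j => hA.1 j i, ?_⟩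
  rw [sinv_transpose, ← transpose_mul, hA.transpose_sinv, smul_mul_assoc,
    nonsing_inv_mul _ ((isUnit_iff_isUnit_det _).mp hA.isUnit_s11), transpose_smul, transpose_one]

theorem IsTypeII.colProd_transpose_sinv (hB : IsTypeII B) (l k : ι) :
    colProd Bᵀ (sinv Bᵀ) l k = (Fintype.card ι : ℂ) • (B.row l * B⁻¹.col k) := by
  ext j
  calc B l j * (sinv B)ᵀ j k
      = B l j * (Fintype.card ι * B⁻¹ j k) := by
        rw [hB.transpose_sinv, Matrix.smul_apply, smul_eq_mul]
    _ = Fintype.card ι * (B l j * B⁻¹ j k) := mul_left_comm _ _ _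

theorem IsTheta.mulVec_colProd_transpose (h : IsTheta A B M S) {l : ι}
    (hA : ∀ i, A l i ≠ 0) (hB : IsTypeII B) (k : ι) :
    S *ᵥ colProd Bᵀ (sinv Bᵀ) l k =
      (Fintype.card ι * M l k) • colProd Aᵀ (sinv Aᵀ) k l := by
  rw [hB.colProd_transpose_sinv, mulVec_smul, h.mulVec_row_mul_col_inv hA hB.isUnit_s11, smul_smul]
  exact congrArg _ (funext fun i => div_eq_mul_inv _ _)

theorem IsTheta.dual (h : IsTheta A (sinv A) M S) (hA : IsTypeII A) :
    IsTheta Aᵀ (sinv Aᵀ) S ((Fintype.card ι : ℂ) • Mᵀ) := fun k l => by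
  have h_swap : colProd Aᵀ (sinv Aᵀ) k l = colProd (sinv A)ᵀ (sinv (sinv A)ᵀ) l k := by
    rw [colProd_comm, sinv_transpose, sinv_transpose, sinv_sinv]
  calc S *ᵥ colProd Aᵀ (sinv Aᵀ) k l
      = (Fintype.card ι * M l k) • colProd Aᵀ (sinv Aᵀ) k l := by
        rw [h_swap, h.mulVec_colProd_transpose (hA.1 l) (isTypeII_sinv hA), h_swap]
    _ = ((Fintype.card ι : ℂ) • Mᵀ) k l • colProd Aᵀ (sinv Aᵀ) k l := rfl

theorem IsTheta.conj {G N : Matrix ι ι ℂ} (h : IsTheta A (sinv A) M S) (hN : IsTheta A B N G)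
    (hA : IsTypeII A) (hB : IsTypeII B) (hG : IsUnit G) :
    IsTheta Bᵀ (sinv Bᵀ) (G⁻¹ * S * G) ((Fintype.card ι : ℂ) • M) := fun l k =>
  conj_mulVec_eq_smul hG (hN.mulVec_colProd_transpose (hA.1 l) hB k) (h.dual hA k l)

theorem theta_B_conjugate_general {G N : Matrix ι ι ℂ} (hA : IsTypeII A) (hB : IsTypeII B)
    (hG : IsUnit G) (hN : IsTheta A B N G) (hM : IsTheta A (sinv A) M S) :
    IsTheta B (sinv B) M (G⁻¹ * S * G)ᵀ := by
  cases isEmpty_or_nonempty ι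
  · exact fun i => isEmptyElim i
  have h_card : (Fintype.card ι : ℂ) ≠ 0 := Nat.cast_ne_zero.mpr Fintype.card_ne_zero
  have h_dual := ((hM.conj hN hA hB hG).dual (isTypeII_transpose hB)).smul (Fintype.card ι : ℂ)⁻¹
  rwa [inv_smul_smul₀ h_card, inv_smul_smul₀ h_card] at h_dual

end TypeII

section JonesPair

variable {ι : Type*} [Fintype ι] {A B : Matrix ι ι ℂ}

theorem isTheta_of_braid (h : ∀ N : Matrix ι ι ℂ, A * (B ⊙ (A * N)) = B ⊙ (A * (B ⊙ N))) :
    IsTheta A B A B := by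
  classical
  refine isTheta_iff_sum.mpr fun k j i => ?_
  have h_single := congrFun (congrFun (h (single k j 1)) i) j
  simp only [mul_apply, hadamard_apply, single_apply, and_true, mul_ite, mul_one, mul_zero,
    Finset.sum_ite_eq, Finset.mem_univ, if_true] at h_single
  calc ∑ p, A i p * (A p k * B p j)
      = ∑ p, A i p * (B p j * A p k) := by simp only [mul_comm]
    _ = B i j * (A i k * B k j) := h_single
    _ = B k j * (A i k * B i j) := by ring

variable [DecidableEq ι]

theorem IsInvertibleJonesPair.isTheta (h : IsInvertibleJonesPair A B) : IsTheta A B A B :=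
  isTheta_of_braid h.1.2.2.1

theorem IsInvertibleJonesPair.transpose_right (h : IsInvertibleJonesPair A B) :
    IsInvertibleJonesPair A Bᵀ := by
  obtain ⟨⟨hA, hB_ne, h_braid, h_braid_transpose⟩, hA_ne, hB⟩ := h
  exact ⟨⟨hA, fun i j => hB_ne j i, h_braid_transpose, h_braid⟩, hA_ne, (isUnit_transpose B).mpr hB⟩

theorem IsInvertibleJonesPair.right_apply_mul_inv_apply_eq (h : IsInvertibleJonesPair A B)
    (i j i' j' : ι) : B i j * B⁻¹ j i = B i' j' * B⁻¹ j' i' := by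
  have hT := h.transpose_right
  have h_row : B i j * B⁻¹ j i = B i' j * B⁻¹ j i' :=
    h.isTheta.apply_mul_inv_apply_eq h.2.1 h.2.2 h.2.2 i i' j
  have h_col : Bᵀ j i' * (Bᵀ)⁻¹ i' j = Bᵀ j' i' * (Bᵀ)⁻¹ i' j' :=
    hT.isTheta.apply_mul_inv_apply_eq h.2.1 hT.2.2 hT.2.2 j j' i'
  rw [← transpose_nonsing_inv] at h_col
  exact h_row.trans h_col

theorem IsInvertibleJonesPair.left_apply_mul_inv_apply (h : IsInvertibleJonesPair A B) (i j : ι) :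
    A i j * A⁻¹ j i = B j i * B⁻¹ i j := by
  have hT := h.transpose_right
  calc A i j * A⁻¹ j i
      = A i i * ∑ k, (Bᵀ)⁻¹ j k := h.isTheta.swap.apply_mul_inv_apply (h.1.2.1 i) h.1.1 hT.2.2 j
    _ = Bᵀ i j * (Bᵀ)⁻¹ j i := (hT.isTheta.apply_mul_inv_apply (h.2.1 i) hT.2.2 hT.2.2 j).symm
    _ = B j i * B⁻¹ i j := by rw [← transpose_nonsing_inv, transpose_apply, transpose_apply]

theorem IsInvertibleJonesPair.isTypeII_right (h : IsInvertibleJonesPair A B) : IsTypeII B :=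
  isTypeII_of_apply_mul_inv_apply_eq h.2.2 h.right_apply_mul_inv_apply_eq

theorem IsInvertibleJonesPair.isTypeII_left (h : IsInvertibleJonesPair A B) : IsTypeII A :=
  isTypeII_of_apply_mul_inv_apply_eq h.1.1 fun i j i' j' => by
    rw [h.left_apply_mul_inv_apply, h.left_apply_mul_inv_apply]
    exact h.right_apply_mul_inv_apply_eq j i j' i'

end JonesPair

theorem theta_B_conjugate {n : ℕ} (hn : 0 < n)
    (A B M SA : Matrix (Fin n) (Fin n) ℂ)
    (h : IsInvertibleJonesPair A B) (hM : IsTheta A (sinv A) M SA) :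
    InNomura B (sinv B) M ∧
    ∃ SB : Matrix (Fin n) (Fin n) ℂ, IsTheta B (sinv B) M SB ∧ SBᵀ = B⁻¹ * SA * B := by
  have hB : IsTheta B (sinv B) M (B⁻¹ * SA * B)ᵀ :=
    theta_B_conjugate_general h.isTypeII_left h.isTypeII_right h.2.2 h.isTheta hM
  exact ⟨hB.inNomura, _, hB, transpose_transpose _⟩
end
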